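/- arXiv:2505.05436 — 6 statements merged into one kernel-verified Lean document; each statement's English description precedes it below -/
import Mathlib

section
/- Let f : (0,∞) × (0,∞) → [−∞,+∞] be an arbitrary function with values in the extended real line. Then there exists a map ε ↦ δ(ε) from (0,∞) to (0,∞) such that δ(ε) → 0 as ε → 0⁺ and limsup_{ε→0⁺} f(ε, δ(ε)) ≤ limsup_{δ→0⁺} limsup_{ε→0⁺} f(ε, δ). -/
open Filter

/-- **Diagonalization lemma** (Lemma `diagonal-argument` in the paper, cf. Attouch,
Corollary 1.16): for any function `f` of two positive real variables with values in the
extended real line, there is a map `ε ↦ δ(ε)` from `(0,∞)` to `(0,∞)` with `δ(ε) → 0`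
as `ε → 0⁺`, such that
`limsup_{ε→0⁺} f(ε, δ(ε)) ≤ limsup_{δ→0⁺} limsup_{ε→0⁺} f(ε, δ)`. -/
theorem diagonalization_lemma (f : ℝ → ℝ → EReal) :
    ∃ δ : ℝ → ℝ,
      (∀ ε : ℝ, 0 < ε → 0 < δ ε) ∧
      Tendsto δ (nhdsWithin (0 : ℝ) (Set.Ioi 0)) (nhds (0 : ℝ)) ∧
      Filter.limsup (fun ε => f ε (δ ε)) (nhdsWithin (0 : ℝ) (Set.Ioi 0)) ≤
        Filter.limsup
          (fun d => Filter.limsup (fun ε => f ε d) (nhdsWithin (0 : ℝ) (Set.Ioi 0)))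
          (nhdsWithin (0 : ℝ) (Set.Ioi 0)) := by
  classical
  set L := Filter.limsup
          (fun d => Filter.limsup (fun ε => f ε d) (nhdsWithin (0 : ℝ) (Set.Ioi 0)))
          (nhdsWithin (0 : ℝ) (Set.Ioi 0)) with hL
  rcases eq_or_lt_of_le (le_top : L ≤ ⊤) with hT | hT
  · refine ⟨fun ε => ε, fun ε h => h, tendsto_id.mono_left nhdsWithin_le_nhds, ?_⟩
    rw [hT]; exact le_top
  obtain ⟨u, -, hu, hut⟩ := exists_seq_strictAnti_tendsto' hT
  have h1 : ∀ n : ℕ, ∃ d : ℝ, 0 < d ∧ d < 1 / ((n : ℝ) + 1) ∧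
      ∀ᶠ ε in nhdsWithin (0 : ℝ) (Set.Ioi 0), f ε d < u n := by
    intro n
    have ha := eventually_lt_of_limsup_lt (hL ▸ (hu n).1)
    have hb : ∀ᶠ d in nhdsWithin (0 : ℝ) (Set.Ioi 0), d ∈ Set.Ioo (0 : ℝ) (1 / ((n : ℝ) + 1)) :=
      Ioo_mem_nhdsGT (by positivity)
    obtain ⟨d, hd, hd'⟩ := (ha.and hb).exists
    exact ⟨d, hd'.1, hd'.2, eventually_lt_of_limsup_lt hd⟩
  choose d hd0 hd1 hd using h1
  let N : ℝ → ℕ := fun ε => Nat.findGreatest (fun n => f ε (d n) < u n) ⌊1 / ε⌋₊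
  have key : ∀ m : ℕ, ∀ᶠ ε in nhdsWithin (0 : ℝ) (Set.Ioi 0),
      m ≤ N ε ∧ f ε (d (N ε)) < u (N ε) := by
    intro m
    have hb : ∀ᶠ ε in nhdsWithin (0 : ℝ) (Set.Ioi 0), ε ∈ Set.Ioo (0 : ℝ) (1 / ((m : ℝ) + 1)) :=
      Ioo_mem_nhdsGT (by positivity)
    filter_upwards [hd m, hb] with ε h h'
    have hm : m ≤ ⌊1 / ε⌋₊ := by
      apply Nat.le_floor
      rw [le_div_iff₀ h'.1]
      have h2 := h'.2
      rw [lt_div_iff₀ (by positivity)] at h2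
      nlinarith [h'.1]
    exact ⟨Nat.le_findGreatest hm h,
      Nat.findGreatest_spec (P := fun n => f ε (d n) < u n) hm h⟩
  have hN : Tendsto N (nhdsWithin (0 : ℝ) (Set.Ioi 0)) atTop :=
    tendsto_atTop.2 fun m => (key m).mono fun _ h => h.1
  have hdt : Tendsto d atTop (nhds 0) :=
    squeeze_zero (fun n => (hd0 n).le) (fun n => (hd1 n).le) tendsto_one_div_add_atTop_nhds_zero_nat
  refine ⟨fun ε => d (N ε), fun ε _ => hd0 _, hdt.comp hN, ?_⟩
  refine le_of_forall_gt_imp_ge_of_dense fun c hc => ?_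
  have hc' := (hut.comp hN).eventually (gt_mem_nhds hc)
  refine limsup_le_of_le (by isBoundedDefault) ?_
  filter_upwards [hc', key 0] with ε h h'
  exact (h'.2.trans h).le
end

section
/- Let A₁,…,A_n ∈ ℝ² (n ≥ 3) be the vertices, listed in cyclic order, of a nondegenerate convex polygon P_n. Then there exists a constant c₁ > 0, depending only on A₁,…,A_n, such that for every choice of values u(A₁),…,u(A_n) ∈ ℝ², the polygon spring energy satisfies E_poly(u,P_n) ≤ c₁ ( ‖∇u‖²_{L²(P_n)} + |P_n| ). -/
/-- The matrix with columns `v` and `w`. -/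
noncomputable def colMat (v w : EuclideanSpace ℝ (Fin 2)) : Matrix (Fin 2) (Fin 2) ℝ :=
  Matrix.of fun i j => ![v i, w i] j

/-- The affine interpolation gradient determined by the points `x₁, x₂, x₃` and the
values `u₁, u₂, u₃`: `(u₁−u₂ | u₂−u₃) · (x₁−x₂ | x₂−x₃)⁻¹`. -/
noncomputable def gradMat (x₁ x₂ x₃ u₁ u₂ u₃ : EuclideanSpace ℝ (Fin 2)) :
    Matrix (Fin 2) (Fin 2) ℝ :=
  colMat (u₁ - u₂) (u₂ - u₃) * (colMat (x₁ - x₂) (x₂ - x₃))⁻¹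

/-- Squared Frobenius norm of a 2×2 matrix. -/
noncomputable def frobSq (M : Matrix (Fin 2) (Fin 2) ℝ) : ℝ :=
  ∑ i, ∑ j, (M i j) ^ 2

/-- Area of the triangle with vertices `A`, `B`, `C`. -/
noncomputable def triArea (A B C : EuclideanSpace ℝ (Fin 2)) : ℝ :=
  (MeasureTheory.volume (convexHull ℝ {A, B, C})).toReal

/-- The polygon spring energy of the vertices `A 1, …, A n` with values `u 1, …, u n`:
`E_poly(u, Pₙ) = Σ_{i=1}^{n−1} (‖u(A_{i+1}) − u(A_i)‖ − ‖A_{i+1} − A_i‖)²`. -/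
noncomputable def polyEnergy (n : ℕ) (A u : ℕ → EuclideanSpace ℝ (Fin 2)) : ℝ :=
  ∑ i ∈ Finset.Icc 1 (n - 1), (‖u (i + 1) - u i‖ - ‖A (i + 1) - A i‖) ^ 2

/-- `‖∇u‖²_{L²(Pₙ)}` for the fan triangulation `T_i = (A 1, A i, A (i+1))`,
`i = 2, …, n−1`: the sum of `‖∇u|_{T_i}‖² · |T_i|`. -/
noncomputable def polyGradSq (n : ℕ) (A u : ℕ → EuclideanSpace ℝ (Fin 2)) : ℝ :=
  ∑ i ∈ Finset.Icc 2 (n - 1),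
    frobSq (gradMat (A 1) (A i) (A (i + 1)) (u 1) (u i) (u (i + 1))) *
      triArea (A 1) (A i) (A (i + 1))

/-- `|Pₙ|`: the total area of the fan triangulation. -/
noncomputable def polyArea (n : ℕ) (A : ℕ → EuclideanSpace ℝ (Fin 2)) : ℝ :=
  ∑ i ∈ Finset.Icc 2 (n - 1), triArea (A 1) (A i) (A (i + 1))

lemma col_det_ne (x y z : EuclideanSpace ℝ (Fin 2)) (h : AffineIndependent ℝ ![x, y, z]) :
    IsUnit (colMat (x - y) (y - z)).det := by
  rw [affineIndependent_iff_linearIndependent_vsub ℝ _ (0 : Fin 3)] at h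
  have h2 : LinearIndependent ℝ ![y - x, z - x] := by
    have := h.comp (fun i : Fin 2 => (⟨i.succ, Fin.succ_ne_zero i⟩ : {j : Fin 3 // j ≠ 0}))
      (by intro a b hab; simpa using hab)
    have e : ((fun i : {j : Fin 3 // j ≠ 0} => ![x, y, z] ↑i -ᵥ ![x, y, z] 0) ∘
        fun i : Fin 2 => (⟨i.succ, Fin.succ_ne_zero i⟩ : {j : Fin 3 // j ≠ 0})) =
        ![y - x, z - x] := by
      ext i j
      fin_cases i <;> simp
    rw [e] at this
    exact this
  rw [LinearIndependent.pair_iff] at h2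
  rw [isUnit_iff_ne_zero]
  intro hd
  simp only [colMat, Matrix.det_fin_two, Matrix.of_apply, PiLp.sub_apply, Matrix.cons_val_zero,
    Matrix.cons_val_one] at hd
  have e1 := h2 (z 1 - x 1) (-(y 1 - x 1)) (by
    ext i
    fin_cases i
    · simp; linarith
    · simp; ring)
  have e2 := h2 (z 0 - x 0) (-(y 0 - x 0)) (by
    ext i
    fin_cases i
    · simp; ring
    · simp; linarith)
  have e3 := h2 1 0 (by
    ext i
    fin_cases i
    · simp; linarith [e2.2]
    · simp; linarith [e1.2])
  exact one_ne_zero e3.1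

lemma triArea_pos_aux (x y z : EuclideanSpace ℝ (Fin 2)) (h : AffineIndependent ℝ ![x, y, z]) :
    0 < triArea x y z := by
  unfold triArea
  have ht : affineSpan ℝ (Set.range ![x, y, z]) = ⊤ :=
    h.affineSpan_eq_top_iff_card_eq_finrank_add_one.2 (by simp)
  have hr : Set.range ![x, y, z] = {x, y, z} := by
    ext w; simp [eq_comm]; tauto
  rw [hr] at ht
  have hi := interior_convexHull_nonempty_iff_affineSpan_eq_top.2 ht
  apply ENNReal.toReal_pos
  · exact (MeasureTheory.Measure.measure_pos_of_nonempty_interior _ hi).ne'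
  · have hf : ({x, y, z} : Set (EuclideanSpace ℝ (Fin 2))).Finite := by simp
    exact (isBounded_convexHull.2 hf.isBounded).measure_lt_top.ne

lemma tri_bound (x y z u v w : EuclideanSpace ℝ (Fin 2)) (h : AffineIndependent ℝ ![x, y, z]) :
    ‖u - v‖ ^ 2 ≤ frobSq (gradMat x y z u v w) * ‖x - y‖ ^ 2 ∧
    ‖v - w‖ ^ 2 ≤ frobSq (gradMat x y z u v w) * ‖y - z‖ ^ 2 := by
  have hm : gradMat x y z u v w * colMat (x - y) (y - z) = colMat (u - v) (v - w) := by
    unfold gradMat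
    rw [Matrix.mul_assoc, Matrix.nonsing_inv_mul _ (col_det_ne x y z h), Matrix.mul_one]
  generalize gradMat x y z u v w = G at hm
  have m := fun i j => congrFun (congrFun hm i) j
  have m00 := m 0 0
  have m01 := m 0 1
  have m10 := m 1 0
  have m11 := m 1 1
  simp only [colMat, Matrix.mul_apply, Fin.sum_univ_two, Matrix.of_apply, Matrix.cons_val_zero,
    Matrix.cons_val_one] at m00 m01 m10 m11
  simp only [EuclideanSpace.norm_sq_eq, Fin.sum_univ_two, frobSq, Real.norm_eq_abs, sq_abs]
  rw [← m00, ← m01, ← m10, ← m11]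
  generalize (x - y).ofLp 0 = a
  generalize (x - y).ofLp 1 = b
  generalize (y - z).ofLp 0 = c
  generalize (y - z).ofLp 1 = d
  constructor
  · nlinarith [sq_nonneg (G 0 0 * b - G 0 1 * a), sq_nonneg (G 1 0 * b - G 1 1 * a)]
  · nlinarith [sq_nonneg (G 0 0 * d - G 0 1 * c), sq_nonneg (G 1 0 * d - G 1 1 * c)]

lemma edge_aux (s t F a : ℝ) (ha : 0 < a) (hs : 0 ≤ s) (ht : 0 ≤ t) (h : s ^ 2 ≤ F * t ^ 2) :
    (s - t) ^ 2 ≤ (t ^ 2 / a) * (F * a + a) := by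
  have : (t ^ 2 / a) * (F * a + a) = F * t ^ 2 + t ^ 2 := by field_simp
  rw [this]
  nlinarith [mul_nonneg hs ht]

/-- Upper bound for the spring energy of a nondegenerate convex polygon with vertices
`A 1, …, A n` (`n ≥ 3`) listed in cyclic order (in particular each fan triangle
`A 1, A i, A (i+1)`, `i = 2, …, n−1`, is nondegenerate): there is `c₁ > 0` depending
only on the vertices such that for all values `u 1, …, u n ∈ ℝ²`,
`E_poly(u, Pₙ) ≤ c₁ (‖∇u‖²_{L²(Pₙ)} + |Pₙ|)`. -/
theorem polygon_energy_upper_bound (n : ℕ) (hn : 3 ≤ n)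
    (A : ℕ → EuclideanSpace ℝ (Fin 2))
    (hfan : ∀ i ∈ Finset.Icc 2 (n - 1), AffineIndependent ℝ ![A 1, A i, A (i + 1)]) :
    ∃ c₁ : ℝ, 0 < c₁ ∧
      ∀ u : ℕ → EuclideanSpace ℝ (Fin 2),
        polyEnergy n A u ≤ c₁ * (polyGradSq n A u + polyArea n A) := by
  have hpos : ∀ i ∈ Finset.Icc 2 (n - 1), 0 < triArea (A 1) (A i) (A (i + 1)) :=
    fun i hi => triArea_pos_aux _ _ _ (hfan i hi)
  have hF : ∀ M, 0 ≤ frobSq M := fun M => by unfold frobSq; positivity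
  have htot : ∀ u, ∀ i ∈ Finset.Icc 2 (n - 1),
      frobSq (gradMat (A 1) (A i) (A (i + 1)) (u 1) (u i) (u (i + 1))) *
        triArea (A 1) (A i) (A (i + 1)) + triArea (A 1) (A i) (A (i + 1)) ≤
      polyGradSq n A u + polyArea n A := by
    intro u i hi
    unfold polyGradSq polyArea
    exact add_le_add
      (Finset.single_le_sum (f := fun i => frobSq (gradMat (A 1) (A i) (A (i + 1)) (u 1) (u i)
        (u (i + 1))) * triArea (A 1) (A i) (A (i + 1)))
        (fun j hj => mul_nonneg (hF _) (hpos j hj).le) hi)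
      (Finset.single_le_sum (f := fun i => triArea (A 1) (A i) (A (i + 1)))
        (fun j hj => (hpos j hj).le) hi)
  have key : ∀ i, ∃ c : ℝ, 0 ≤ c ∧ (i ∈ Finset.Icc 1 (n - 1) →
      ∀ u : ℕ → EuclideanSpace ℝ (Fin 2), (‖u (i + 1) - u i‖ - ‖A (i + 1) - A i‖) ^ 2 ≤
        c * (polyGradSq n A u + polyArea n A)) := by
    intro i
    by_cases hi : i ∈ Finset.Icc 1 (n - 1)
    · rw [Finset.mem_Icc] at hi
      by_cases h1 : i = 1
      · subst h1
        have h2 : 2 ∈ Finset.Icc 2 (n - 1) := by rw [Finset.mem_Icc]; omega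
        have ha := hpos 2 h2
        refine ⟨‖A 2 - A 1‖ ^ 2 / triArea (A 1) (A 2) (A (2 + 1)), by positivity, fun _ u => ?_⟩
        refine le_trans (edge_aux _ _ _ _ ha (norm_nonneg _) (norm_nonneg _) ?_)
          (mul_le_mul_of_nonneg_left (htot u 2 h2) (by positivity))
        have := (tri_bound _ _ _ (u 1) (u 2) (u (2 + 1)) (hfan 2 h2)).1
        rwa [norm_sub_rev, norm_sub_rev (A 1)] at this
      · have h2 : i ∈ Finset.Icc 2 (n - 1) := by rw [Finset.mem_Icc]; omega
        have ha := hpos i h2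
        refine ⟨‖A (i + 1) - A i‖ ^ 2 / triArea (A 1) (A i) (A (i + 1)), by positivity,
          fun _ u => ?_⟩
        refine le_trans (edge_aux _ _ _ _ ha (norm_nonneg _) (norm_nonneg _) ?_)
          (mul_le_mul_of_nonneg_left (htot u i h2) (by positivity))
        have := (tri_bound _ _ _ (u 1) (u i) (u (i + 1)) (hfan i h2)).2
        rwa [norm_sub_rev, norm_sub_rev (A i)] at this
    · exact ⟨0, le_rfl, fun h => absurd h hi⟩
  choose c hc hb using key
  have hs : 0 ≤ ∑ i ∈ Finset.Icc 1 (n - 1), c i := Finset.sum_nonneg fun i _ => hc i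
  refine ⟨∑ i ∈ Finset.Icc 1 (n - 1), c i + 1, by linarith, fun u => ?_⟩
  have hT : 0 ≤ polyGradSq n A u + polyArea n A := by
    unfold polyGradSq polyArea
    exact add_nonneg (Finset.sum_nonneg fun j hj => mul_nonneg (hF _) (hpos j hj).le)
      (Finset.sum_nonneg fun j hj => (hpos j hj).le)
  have : polyEnergy n A u ≤
      (∑ i ∈ Finset.Icc 1 (n - 1), c i) * (polyGradSq n A u + polyArea n A) := by
    unfold polyEnergy
    rw [Finset.sum_mul]
    exact Finset.sum_le_sum fun i hi => hb i hi u
  linarith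
end

section
/- Let A₁,…,A_n ∈ ℝ² (n ≥ 3) be the vertices, listed in cyclic order, of a nondegenerate convex polygon P_n. Then there exist constants c₂ > 0 and c₃ > 0, depending only on A₁,…,A_n, such that for every choice of values u(A₁),…,u(A_n) ∈ ℝ², the polygon spring energy satisfies E_poly(u,P_n) ≥ c₂ ‖∇u‖²_{L²(P_n)} − c₃ |P_n|. -/
lemma aux_frob_mul (M N : Matrix (Fin 2) (Fin 2) ℝ) :
    frobSq (M * N) ≤ frobSq M * frobSq N := by
  simp only [frobSq, Matrix.mul_apply, Fin.sum_univ_two]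
  nlinarith [sq_nonneg (M 0 0 * N 1 0 - M 0 1 * N 0 0), sq_nonneg (M 0 0 * N 1 1 - M 0 1 * N 0 1),
    sq_nonneg (M 1 0 * N 1 0 - M 1 1 * N 0 0), sq_nonneg (M 1 0 * N 1 1 - M 1 1 * N 0 1)]

lemma aux_frob_nonneg (M : Matrix (Fin 2) (Fin 2) ℝ) : 0 ≤ frobSq M := by
  unfold frobSq; positivity

lemma aux_frob_col (v w : EuclideanSpace ℝ (Fin 2)) :
    frobSq (colMat v w) = ‖v‖ ^ 2 + ‖w‖ ^ 2 := by
  simp [frobSq, colMat, EuclideanSpace.norm_sq_eq, Fin.sum_univ_two]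
  ring

lemma aux_area_pos (A B C : EuclideanSpace ℝ (Fin 2)) (h : AffineIndependent ℝ ![A, B, C]) :
    0 < triArea A B C := by
  have hr : Set.range ![A, B, C] = {A, B, C} := by
    ext x; simp [eq_comm]; tauto
  have h1 : (interior (convexHull ℝ ({A, B, C} : Set (EuclideanSpace ℝ (Fin 2))))).Nonempty := by
    rw [interior_convexHull_nonempty_iff_affineSpan_eq_top, ← hr,
      h.affineSpan_eq_top_iff_card_eq_finrank_add_one]
    simp
  have hb : Bornology.IsBounded (convexHull ℝ ({A, B, C} : Set (EuclideanSpace ℝ (Fin 2)))) := by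
    rw [isBounded_convexHull]
    exact (Set.toFinite _).isBounded
  exact ENNReal.toReal_pos (MeasureTheory.Measure.measure_pos_of_nonempty_interior _ h1).ne'
    hb.measure_lt_top.ne

lemma aux_path (n : ℕ) (u : ℕ → EuclideanSpace ℝ (Fin 2)) (i : ℕ) (hi : 1 ≤ i) (hn : i ≤ n) :
    ‖u 1 - u i‖ ≤ ∑ j ∈ Finset.Icc 1 (n - 1), ‖u (j + 1) - u j‖ := by
  have key : ∀ k, ‖u 1 - u (k + 1)‖ ≤ ∑ j ∈ Finset.Icc 1 k, ‖u (j + 1) - u j‖ := by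
    intro k
    induction k with
    | zero => simp
    | succ k ih =>
      rw [Finset.sum_Icc_succ_top (by omega)]
      have h := norm_sub_le_norm_sub_add_norm_sub (u 1) (u (k + 1)) (u (k + 1 + 1))
      rw [norm_sub_rev (u (k + 1))] at h
      linarith
  obtain ⟨k, rfl⟩ : ∃ k, i = k + 1 := ⟨i - 1, by omega⟩
  refine (key k).trans (Finset.sum_le_sum_of_subset_of_nonneg ?_ fun _ _ _ => norm_nonneg _)
  exact Finset.Icc_subset_Icc_right (by omega)

/-- Lower bound for the spring energy of a nondegenerate convex polygon with vertices
`A 1, …, A n` (`n ≥ 3`) listed in cyclic order (in particular each fan triangle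
`A 1, A i, A (i+1)`, `i = 2, …, n−1`, is nondegenerate): there are `c₂, c₃ > 0`
depending only on the vertices such that for all values `u 1, …, u n ∈ ℝ²`,
`E_poly(u, Pₙ) ≥ c₂ ‖∇u‖²_{L²(Pₙ)} − c₃ |Pₙ|`. -/
theorem polygon_energy_lower_bound (n : ℕ) (hn : 3 ≤ n)
    (A : ℕ → EuclideanSpace ℝ (Fin 2))
    (hfan : ∀ i ∈ Finset.Icc 2 (n - 1), AffineIndependent ℝ ![A 1, A i, A (i + 1)]) :
    ∃ c₂ c₃ : ℝ, 0 < c₂ ∧ 0 < c₃ ∧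
      ∀ u : ℕ → EuclideanSpace ℝ (Fin 2),
        polyEnergy n A u ≥ c₂ * polyGradSq n A u - c₃ * polyArea n A := by
  have hterm : ∀ i ∈ Finset.Icc 2 (n - 1), 0 < triArea (A 1) (A i) (A (i + 1)) :=
    fun i hi => aux_area_pos _ _ _ (hfan i hi)
  have hP : 0 < polyArea n A :=
    Finset.sum_pos hterm ⟨2, Finset.mem_Icc.2 ⟨le_rfl, by omega⟩⟩
  set K : ℝ := ∑ i ∈ Finset.Icc 2 (n - 1),
    frobSq (colMat (A 1 - A i) (A i - A (i + 1)))⁻¹ * triArea (A 1) (A i) (A (i + 1)) with hK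
  have hK0 : 0 ≤ K := Finset.sum_nonneg fun i hi =>
    mul_nonneg (aux_frob_nonneg _) (hterm i hi).le
  set L : ℝ := ∑ i ∈ Finset.Icc 1 (n - 1), ‖A (i + 1) - A i‖ ^ 2 with hL
  have hL0 : 0 ≤ L := Finset.sum_nonneg fun i hi => sq_nonneg _
  have hC : 0 < 4 * n * K + 1 := by positivity
  refine ⟨(4 * n * K + 1)⁻¹, (L + 1) / polyArea n A, by positivity, by positivity, fun u => ?_⟩
  rw [div_mul_cancel₀ _ hP.ne', ge_iff_le, sub_le_iff_le_add, inv_mul_le_iff₀ hC]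
  have hE0 : 0 ≤ polyEnergy n A u := Finset.sum_nonneg fun i hi => sq_nonneg _
  set S : ℝ := ∑ j ∈ Finset.Icc 1 (n - 1), ‖u (j + 1) - u j‖ with hS
  have hS2 : S ^ 2 ≤ n * (2 * polyEnergy n A u + 2 * L) := by
    have h1 : S ^ 2 ≤ ((Finset.Icc 1 (n - 1)).card : ℝ) *
        ∑ j ∈ Finset.Icc 1 (n - 1), ‖u (j + 1) - u j‖ ^ 2 := sq_sum_le_card_mul_sum_sq
    have h2 : ∑ j ∈ Finset.Icc 1 (n - 1), ‖u (j + 1) - u j‖ ^ 2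
        ≤ 2 * polyEnergy n A u + 2 * L := by
      rw [polyEnergy, hL, Finset.mul_sum, Finset.mul_sum, ← Finset.sum_add_distrib]
      refine Finset.sum_le_sum fun j _ => ?_
      nlinarith [sq_nonneg (‖u (j + 1) - u j‖ - 2 * ‖A (j + 1) - A j‖)]
    have h3 : ((Finset.Icc 1 (n - 1)).card : ℝ) ≤ n := by
      rw [Nat.card_Icc]; exact_mod_cast (by omega)
    exact h1.trans (mul_le_mul h3 h2 (Finset.sum_nonneg fun i hi => sq_nonneg _) (by positivity))
  have hG : polyGradSq n A u ≤ 2 * S ^ 2 * K := by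
    rw [polyGradSq, hK, Finset.mul_sum]
    refine Finset.sum_le_sum fun i hi => ?_
    have hi' := Finset.mem_Icc.1 hi
    rw [← mul_assoc]
    refine mul_le_mul_of_nonneg_right ?_ (hterm i hi).le
    refine (aux_frob_mul _ _).trans (mul_le_mul_of_nonneg_right ?_ (aux_frob_nonneg _))
    rw [aux_frob_col]
    have h1 : ‖u 1 - u i‖ ≤ S := aux_path n u i (by omega) (by omega)
    have h2 : ‖u i - u (i + 1)‖ ≤ S := by
      rw [norm_sub_rev]
      exact Finset.single_le_sum (f := fun j => ‖u (j + 1) - u j‖)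
        (fun _ _ => norm_nonneg _) (Finset.mem_Icc.2 ⟨by omega, hi'.2⟩)
    have h3 := pow_le_pow_left₀ (norm_nonneg _) h1 2
    have h4 := pow_le_pow_left₀ (norm_nonneg _) h2 2
    linarith
  have h5 := mul_le_mul_of_nonneg_right hS2 hK0
  have h6 : 0 ≤ (n : ℝ) * K := by positivity
  nlinarith
end

section
/- Let T ⊂ ℝ² be the closed triangle with affinely independent vertices x₁, x₂, x₃, let u : ℝ² → ℝ² be an affine map, let φ : ℝ² → ℝ be a bounded function defined on T, and let h : ℝ² → ℝ² be the unique affine map with h(x_i) = φ(x_i)·u(x_i) for i = 1,2,3. Then there exists a constant C′ > 0, depending only on x₁, x₂, x₃, such that ∫_T ‖h(x)‖² dx ≤ C′ · (sup_{x∈T} |φ(x)|)² · ∫_T ‖u(x)‖² dx. -/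
open MeasureTheory

/-- The affine map `x ↦ M x + b` on `ℝ²`. -/
noncomputable def affApply (M : Matrix (Fin 2) (Fin 2) ℝ) (b x : EuclideanSpace ℝ (Fin 2)) :
    EuclideanSpace ℝ (Fin 2) :=
  (WithLp.equiv 2 (Fin 2 → ℝ)).symm
    (M.mulVec ((WithLp.equiv 2 (Fin 2 → ℝ)) x) + (WithLp.equiv 2 (Fin 2 → ℝ)) b)

abbrev E2 := EuclideanSpace ℝ (Fin 2)

lemma affApply_comb (M : Matrix (Fin 2) (Fin 2) ℝ) (b x y : E2) (s t : ℝ) (h : s + t = 1) :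
    affApply M b (s • x + t • y) = s • affApply M b x + t • affApply M b y := by
  obtain rfl : t = 1 - s := by linarith
  ext i
  fin_cases i <;> simp [affApply, Matrix.mulVec, dotProduct, Fin.sum_univ_two] <;> ring

lemma affApply_cont (M : Matrix (Fin 2) (Fin 2) ℝ) (b : E2) : Continuous (affApply M b) := by
  have h : Continuous fun x : E2 => M.mulVec (WithLp.ofLp x) + WithLp.ofLp b :=
    (Continuous.matrix_mulVec continuous_const (PiLp.continuous_ofLp 2 _)).add continuous_const
  exact (PiLp.continuous_toLp 2 _).comp h

lemma vertex_bound (T : Set E2) (hT : IsCompact T) (hc : Convex ℝ T) (a : E2) (ha : a ∈ T)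
    (M : Matrix (Fin 2) (Fin 2) ℝ) (b : E2) :
    volume.real T * ‖affApply M b a‖ ^ 2 ≤ 34 * ∫ x in T, ‖affApply M b x‖ ^ 2 := by
  set u := affApply M b with hu
  have hcont : Continuous u := affApply_cont M b
  have hms : MeasurableSet T := hT.isClosed.measurableSet
  set m : E2 → E2 := fun z => (1 / 2 : ℝ) • (z + a) with hm
  have hmcont : Continuous m := by fun_prop
  have hmem : ∀ z ∈ T, m z ∈ T := by
    intro z hz
    have := hc hz ha (a := 1 / 2) (b := 1 / 2) (by norm_num) (by norm_num) (by norm_num)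
    simpa [hm, smul_add] using this
  have hmu : ∀ z, u a = (2 : ℝ) • u (m z) - u z := by
    intro z
    have : u (m z) = (1 / 2 : ℝ) • u z + (1 / 2 : ℝ) • u a := by
      rw [hu, ← affApply_comb _ _ _ _ _ _ (by norm_num), ← smul_add]
    rw [this]; module
  have hpt : ∀ z, ‖u a‖ ^ 2 ≤ 8 * ‖u (m z)‖ ^ 2 + 2 * ‖u z‖ ^ 2 := by
    intro z
    have h1 : ‖u a‖ ≤ 2 * ‖u (m z)‖ + ‖u z‖ := by
      rw [hmu z]
      refine (norm_sub_le _ _).trans ?_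
      rw [norm_smul]; simp
    have h0 := norm_nonneg (u a)
    nlinarith [sq_nonneg (2 * ‖u (m z)‖ - ‖u z‖), pow_le_pow_left₀ h0 h1 2]
  have i1 : IntegrableOn (fun z => ‖u z‖ ^ 2) T :=
    (Continuous.continuousOn (by fun_prop)).integrableOn_compact hT
  have i2 : IntegrableOn (fun z => ‖u (m z)‖ ^ 2) T :=
    (Continuous.continuousOn (by fun_prop)).integrableOn_compact hT
  have i0 : IntegrableOn (fun _ => ‖u a‖ ^ 2) T (volume : Measure E2) :=
    (Continuous.continuousOn (by fun_prop)).integrableOn_compact hT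
  have e1 : ∫ z in T, ‖u a‖ ^ 2 ≤ ∫ z in T, (8 * ‖u (m z)‖ ^ 2 + 2 * ‖u z‖ ^ 2) :=
    integral_mono i0 ((i2.const_mul 8).add (i1.const_mul 2)) hpt
  rw [integral_add (i2.const_mul 8) (i1.const_mul 2), integral_const_mul,
    integral_const_mul, setIntegral_const, smul_eq_mul] at e1
  set g : E2 → ℝ := T.indicator (fun z => ‖u z‖ ^ 2) with hg
  have ig : Integrable g := i1.integrable_indicator hms
  have igm : Integrable (fun z => g (m z)) := by
    have : Integrable (fun z => g ((1 / 2 : ℝ) • z)) := ig.comp_smul (by norm_num)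
    exact this.comp_add_right a
  have e2 : ∫ z in T, ‖u (m z)‖ ^ 2 ≤ ∫ z, g (m z) := by
    rw [← integral_indicator hms]
    refine integral_mono (i2.integrable_indicator hms) igm ?_
    intro z
    by_cases hz : z ∈ T
    · simp [hg, hz, hmem z hz]
    · simp only [Set.indicator_of_notMem hz]
      exact Set.indicator_nonneg (fun _ _ => by positivity) _
  have e3 : ∫ z, g (m z) = 4 * ∫ z in T, ‖u z‖ ^ 2 := by
    have h1 : ∫ z, g (m z) = ∫ z, g ((1 / 2 : ℝ) • z) :=
      integral_add_right_eq_self (fun z => g ((1 / 2 : ℝ) • z)) a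
    rw [h1, Measure.integral_comp_smul, hg, integral_indicator hms]
    norm_num
  linarith

/-- `L²` bound for the affine interpolation of `φ·u`: if `T` is the closed triangle with
affinely independent vertices `x₁, x₂, x₃`, `u : ℝ² → ℝ²` is affine, `φ : ℝ² → ℝ` is
bounded on `T`, and `h` is the affine map with `h(xᵢ) = φ(xᵢ)·u(xᵢ)`, then there is
`C′ > 0` depending only on the vertices with
`∫_T ‖h‖² ≤ C′ (sup_T |φ|)² ∫_T ‖u‖²`. -/
theorem L2_bound_interpolated_product (x₁ x₂ x₃ : EuclideanSpace ℝ (Fin 2))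
    (hInd : AffineIndependent ℝ ![x₁, x₂, x₃]) :
    ∃ C' : ℝ, 0 < C' ∧
      ∀ (Du : Matrix (Fin 2) (Fin 2) ℝ) (bu : EuclideanSpace ℝ (Fin 2))
        (φ : EuclideanSpace ℝ (Fin 2) → ℝ),
        BddAbove ((fun x => |φ x|) '' convexHull ℝ {x₁, x₂, x₃}) →
        ∀ (Dh : Matrix (Fin 2) (Fin 2) ℝ) (bh : EuclideanSpace ℝ (Fin 2)),
          affApply Dh bh x₁ = φ x₁ • affApply Du bu x₁ →
          affApply Dh bh x₂ = φ x₂ • affApply Du bu x₂ →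
          affApply Dh bh x₃ = φ x₃ • affApply Du bu x₃ →
          (∫ x in convexHull ℝ {x₁, x₂, x₃}, ‖affApply Dh bh x‖ ^ 2) ≤
            C' * (sSup ((fun x => |φ x|) '' convexHull ℝ {x₁, x₂, x₃})) ^ 2 *
              ∫ x in convexHull ℝ {x₁, x₂, x₃}, ‖affApply Du bu x‖ ^ 2 := by
  refine ⟨34, by norm_num, ?_⟩
  intro Du bu φ hφ Dh bh h1 h2 h3
  set T : Set E2 := convexHull ℝ {x₁, x₂, x₃} with hTdef
  have hT : IsCompact T := (Set.toFinite {x₁, x₂, x₃}).isCompact_convexHull ℝ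
  have hc : Convex ℝ T := convex_convexHull _ _
  have m1 : x₁ ∈ T := subset_convexHull _ _ (by simp)
  have m2 : x₂ ∈ T := subset_convexHull _ _ (by simp)
  have m3 : x₃ ∈ T := subset_convexHull _ _ (by simp)
  set S := sSup ((fun x => |φ x|) '' T) with hS
  have hle : ∀ x ∈ T, |φ x| ≤ S := fun x hx => le_csSup hφ ⟨x, hx, rfl⟩
  have key : ∃ a ∈ T, ∀ x ∈ T, ‖affApply Dh bh x‖ ≤ S * ‖affApply Du bu a‖ := by
    obtain ⟨a, haT, ha1, ha2, ha3⟩ : ∃ a ∈ T, ‖affApply Du bu x₁‖ ≤ ‖affApply Du bu a‖ ∧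
        ‖affApply Du bu x₂‖ ≤ ‖affApply Du bu a‖ ∧ ‖affApply Du bu x₃‖ ≤ ‖affApply Du bu a‖ := by
      obtain ⟨a, ha, hmax⟩ := hT.exists_isMaxOn ⟨x₁, m1⟩ (affApply_cont Du bu).norm.continuousOn
      exact ⟨a, ha, hmax m1, hmax m2, hmax m3⟩
    refine ⟨a, haT, ?_⟩
    have hconv : Convex ℝ {x : E2 | ‖affApply Dh bh x‖ ≤ S * ‖affApply Du bu a‖} := by
      intro x hx y hy s t hs ht hst
      simp only [Set.mem_ofPred_eq] at *
      rw [affApply_comb _ _ _ _ _ _ hst]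
      refine (norm_add_le _ _).trans ?_
      rw [norm_smul, norm_smul, Real.norm_of_nonneg hs, Real.norm_of_nonneg ht]
      obtain rfl : t = 1 - s := by linarith
      nlinarith [mul_le_mul_of_nonneg_left hx hs, mul_le_mul_of_nonneg_left hy ht]
    have hv : ∀ v ∈ T, affApply Dh bh v = φ v • affApply Du bu v →
        ‖affApply Du bu v‖ ≤ ‖affApply Du bu a‖ →
        ‖affApply Dh bh v‖ ≤ S * ‖affApply Du bu a‖ := by
      intro v hv e hl
      rw [e, norm_smul, Real.norm_eq_abs]
      exact mul_le_mul (hle v hv) hl (norm_nonneg _) ((abs_nonneg _).trans (hle v hv))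
    refine convexHull_min ?_ hconv
    rintro x (rfl | rfl | rfl)
    · exact hv _ m1 h1 ha1
    · exact hv _ m2 h2 ha2
    · exact hv _ m3 h3 ha3
  obtain ⟨a, haT, hb⟩ := key
  have hcont := affApply_cont Dh bh
  have e1 : ∫ x in T, ‖affApply Dh bh x‖ ^ 2 ≤ ∫ x in T, (S * ‖affApply Du bu a‖) ^ 2 := by
    refine setIntegral_mono_on ?_ ?_ hT.isClosed.measurableSet ?_
    · exact (Continuous.continuousOn (by fun_prop)).integrableOn_compact hT
    · exact (Continuous.continuousOn (by fun_prop)).integrableOn_compact hT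
    · intro x hx
      exact pow_le_pow_left₀ (norm_nonneg _) (hb x hx) 2
  rw [setIntegral_const, smul_eq_mul] at e1
  have e2 := mul_le_mul_of_nonneg_left (vertex_bound T hT hc a haT Du bu) (sq_nonneg S)
  refine e1.trans ?_
  linarith [e2, mul_pow S ‖affApply Du bu a‖ 2, show volume.real T * (S * ‖affApply Du bu a‖) ^ 2 = S ^ 2 * (volume.real T * ‖affApply Du bu a‖ ^ 2) by ring]
end

section
/- Let O = (0,0), A = (1,0), B = (0,1), C = (1,1) in ℝ². For values u(O), u(A), u(B), u(C) ∈ ℝ², define the square-lattice spring energy E_spr(u) = ½[ (‖u(A)−u(O)‖−1)² + (‖u(B)−u(O)‖−1)² + (‖u(A)−u(C)‖−1)² + (‖u(B)−u(C)‖−1)² ], and define ‖∇u‖²_{L²(U)} = ½( ‖G₁‖² + ‖G₂‖² ), where G₁ is the affine interpolation gradient on the triangle with vertices O, A, C (from the values u(O), u(A), u(C)) and G₂ is the affine interpolation gradient on the triangle with vertices O, B, C. Then there exist constants C₁ > 0, C₂ > 0 and D₂ ≥ 0, independent of u, such that for all values u(O), u(A), u(B), u(C) ∈ ℝ²: C₂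 ( ‖∇u‖²_{L²(U)} − D₂ ) ≤ E_spr(u) ≤ C₁ ( ‖∇u‖²_{L²(U)} + 1 ). -/
/-- The point `(a, b) ∈ ℝ²`. -/
noncomputable def pt (a b : ℝ) : EuclideanSpace ℝ (Fin 2) :=
  (WithLp.equiv 2 (Fin 2 → ℝ)).symm ![a, b]

/-- The square-lattice spring energy of the unit cell, for values `uO, uA, uB, uC`
at the vertices `O = (0,0)`, `A = (1,0)`, `B = (0,1)`, `C = (1,1)`. -/
noncomputable def sqSpringEnergy (uO uA uB uC : EuclideanSpace ℝ (Fin 2)) : ℝ :=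
  (1 / 2) * ((‖uA - uO‖ - 1) ^ 2 + (‖uB - uO‖ - 1) ^ 2 +
    (‖uA - uC‖ - 1) ^ 2 + (‖uB - uC‖ - 1) ^ 2)

/-- `‖∇u‖²_{L²(U)}` for the square unit cell, triangulated by the triangles `OAC` and
`OBC` (each of area `½`). -/
noncomputable def sqGradSq (uO uA uB uC : EuclideanSpace ℝ (Fin 2)) : ℝ :=
  (1 / 2) * (frobSq (gradMat (pt 0 0) (pt 1 0) (pt 1 1) uO uA uC) +
    frobSq (gradMat (pt 0 0) (pt 0 1) (pt 1 1) uO uB uC))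

theorem aux_inv1 : (colMat (pt 0 0 - pt 1 0) (pt 1 0 - pt 1 1))⁻¹ = !![-1, 0; 0, -1] := by
  apply Matrix.inv_eq_right_inv
  ext i j
  fin_cases i <;> fin_cases j <;> simp [colMat, pt, Matrix.mul_apply, Fin.sum_univ_two]

theorem aux_inv2 : (colMat (pt 0 0 - pt 0 1) (pt 0 1 - pt 1 1))⁻¹ = !![0, -1; -1, 0] := by
  apply Matrix.inv_eq_right_inv
  ext i j
  fin_cases i <;> fin_cases j <;> simp [colMat, pt, Matrix.mul_apply, Fin.sum_univ_two]

theorem aux_grad (uO uA uB uC : EuclideanSpace ℝ (Fin 2)) :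
    sqGradSq uO uA uB uC =
      (1 / 2) * (‖uA - uO‖ ^ 2 + ‖uB - uO‖ ^ 2 + ‖uA - uC‖ ^ 2 + ‖uB - uC‖ ^ 2) := by
  unfold sqGradSq gradMat
  rw [aux_inv1, aux_inv2]
  simp only [EuclideanSpace.real_norm_sq_eq]
  simp [frobSq, colMat, Matrix.mul_apply, Fin.sum_univ_two]
  ring

/-- The spring energy of the square-lattice unit cell is bounded above and below by the
`L²` norm of the gradient of the piecewise affine interpolation: there are constants
`C₁, C₂ > 0` and `D₂ ≥ 0`, independent of `u`, such that for all values
`uO, uA, uB, uC ∈ ℝ²`,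
`C₂(‖∇u‖²_{L²(U)} − D₂) ≤ E_spr(u) ≤ C₁(‖∇u‖²_{L²(U)} + 1)`. -/
theorem square_lattice_energy_bounds :
    ∃ C₁ C₂ D₂ : ℝ, 0 < C₁ ∧ 0 < C₂ ∧ 0 ≤ D₂ ∧
      ∀ uO uA uB uC : EuclideanSpace ℝ (Fin 2),
        C₂ * (sqGradSq uO uA uB uC - D₂) ≤ sqSpringEnergy uO uA uB uC ∧
        sqSpringEnergy uO uA uB uC ≤ C₁ * (sqGradSq uO uA uB uC + 1) := by
  refine ⟨4, 1 / 2, 4, by norm_num, by norm_num, by norm_num, ?_⟩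
  intro uO uA uB uC
  rw [aux_grad]
  unfold sqSpringEnergy
  generalize ‖uA - uO‖ = a
  generalize ‖uB - uO‖ = b
  generalize ‖uA - uC‖ = c
  generalize ‖uB - uC‖ = d
  constructor
  · nlinarith [sq_nonneg (a - 2), sq_nonneg (b - 2), sq_nonneg (c - 2), sq_nonneg (d - 2)]
  · nlinarith [sq_nonneg (a + 1), sq_nonneg (b + 1), sq_nonneg (c + 1), sq_nonneg (d + 1),
      sq_nonneg a, sq_nonneg b, sq_nonneg c, sq_nonneg d]
end

section
/- Let A, B, C, D ∈ ℝ² be the vertices, listed in cyclic order, of a nondegenerate convex quadrilateral (so that the triangles ABC and ACD are nondegenerate), with areas |ΔABC| and |ΔACD|. For values u(A), u(B), u(C), u(D) ∈ ℝ², set E_poly(u) = (‖u(A)−u(B)‖−‖A−B‖)² + (‖u(B)−u(C)‖−‖B−C‖)² + (‖u(C)−u(D)‖−‖C−D‖)², and ‖∇u‖² = ‖G₁‖²·|ΔABC| + ‖G₂‖²·|ΔACD|, where G₁ is the affine interpolation gradient on triangle ABC and G₂ is the affine interpolation gradient on triangle ACD. Then there exist positive constants c₁, c₂, c₃, depending only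 on A, B, C, D, such that for all u: E_poly(u) ≤ c₁ ( ‖∇u‖² + |ΔABC| + |ΔACD| ) and E_poly(u) ≥ c₂ ‖∇u‖² − c₃ ( |ΔABC| + |ΔACD| ). -/
/-- The quadrilateral spring energy
`E_poly(u) = (‖u(A)−u(B)‖−‖A−B‖)² + (‖u(B)−u(C)‖−‖B−C‖)² + (‖u(C)−u(D)‖−‖C−D‖)²`. -/
noncomputable def quadEnergy (A B C D uA uB uC uD : EuclideanSpace ℝ (Fin 2)) : ℝ :=
  (‖uA - uB‖ - ‖A - B‖) ^ 2 + (‖uB - uC‖ - ‖B - C‖) ^ 2 + (‖uC - uD‖ - ‖C - D‖) ^ 2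

/-- `‖∇u‖²` for the quadrilateral `ABCD` triangulated by `ABC` and `ACD`. -/
noncomputable def quadGradSq (A B C D uA uB uC uD : EuclideanSpace ℝ (Fin 2)) : ℝ :=
  frobSq (gradMat A B C uA uB uC) * triArea A B C +
    frobSq (gradMat A C D uA uC uD) * triArea A C D

lemma aux_det (A B C : EuclideanSpace ℝ (Fin 2))
    (h : AffineIndependent ℝ ![A, B, C]) : IsUnit (colMat (A - B) (B - C)).det := by
  rw [isUnit_iff_ne_zero]
  intro h0
  obtain ⟨v, hv, hv0⟩ := Matrix.exists_mulVec_eq_zero_iff.2 h0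
  rw [affineIndependent_iff] at h
  have e0 := congrFun hv0 0
  have e1 := congrFun hv0 1
  simp [colMat, Matrix.mulVec, dotProduct, Fin.sum_univ_two] at e0 e1
  have := h Finset.univ ![v 0, v 1 - v 0, - v 1] (by simp [Fin.sum_univ_three]) (by
    ext i
    fin_cases i
    · simp [Fin.sum_univ_three]; linarith
    · simp [Fin.sum_univ_three]; linarith)
  have w0 := this 0 (by simp)
  have w2 := this 2 (by simp)
  simp at w0 w2
  apply hv
  ext i
  fin_cases i <;> simp [w0, w2]

lemma aux_cmp (A B C : EuclideanSpace ℝ (Fin 2)) (h : AffineIndependent ℝ ![A, B, C]) :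
    ∃ K : ℝ, 0 < K ∧ ∀ u v w : EuclideanSpace ℝ (Fin 2),
      ‖u - v‖ ^ 2 + ‖v - w‖ ^ 2 ≤ K * frobSq (gradMat A B C u v w) ∧
      frobSq (gradMat A B C u v w) ≤ K * (‖u - v‖ ^ 2 + ‖v - w‖ ^ 2) := by
  have hd := aux_det A B C h
  set X := colMat (A - B) (B - C) with hX
  have p1 := aux_frob_nonneg X
  have p2 := aux_frob_nonneg X⁻¹
  refine ⟨frobSq X + frobSq X⁻¹ + 1, by positivity, fun u v w => ?_⟩
  have p3 := aux_frob_nonneg (gradMat A B C u v w)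
  have e : colMat (u - v) (v - w) = gradMat A B C u v w * X := by
    rw [gradMat, ← hX, Matrix.nonsing_inv_mul_cancel_right _ _ hd]
  have q1 := aux_frob_mul (gradMat A B C u v w) X
  rw [← e, aux_frob_col] at q1
  have q2 := aux_frob_mul (colMat (u - v) (v - w)) X⁻¹
  rw [aux_frob_col] at q2
  change frobSq (gradMat A B C u v w) ≤ _ at q2
  have p4 : 0 ≤ ‖u - v‖ ^ 2 + ‖v - w‖ ^ 2 := by positivity
  constructor <;> nlinarith [mul_nonneg p3 p2, mul_nonneg p4 p1]


/-- Upper and lower bounds for the spring energy of a nondegenerate convex quadrilateral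
`ABCD` (so the triangles `ABC` and `ACD` are nondegenerate): there are constants
`c₁, c₂, c₃ > 0` depending only on `A, B, C, D` such that for all values
`uA, uB, uC, uD ∈ ℝ²`, `E_poly(u) ≤ c₁(‖∇u‖² + |ΔABC| + |ΔACD|)` and
`E_poly(u) ≥ c₂ ‖∇u‖² − c₃(|ΔABC| + |ΔACD|)`. -/
theorem quadrilateral_energy_bounds (A B C D : EuclideanSpace ℝ (Fin 2))
    (hABC : AffineIndependent ℝ ![A, B, C]) (hACD : AffineIndependent ℝ ![A, C, D]) :
    ∃ c₁ c₂ c₃ : ℝ, 0 < c₁ ∧ 0 < c₂ ∧ 0 < c₃ ∧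
      ∀ uA uB uC uD : EuclideanSpace ℝ (Fin 2),
        quadEnergy A B C D uA uB uC uD ≤
          c₁ * (quadGradSq A B C D uA uB uC uD + (triArea A B C + triArea A C D)) ∧
        quadEnergy A B C D uA uB uC uD ≥
          c₂ * quadGradSq A B C D uA uB uC uD - c₃ * (triArea A B C + triArea A C D) := by

  have s1 := aux_area_pos A B C hABC
  have s2 := aux_area_pos A C D hACD
  obtain ⟨K, hK, HK⟩ := aux_cmp A B C hABC
  obtain ⟨J, hJ, HJ⟩ := aux_cmp A C D hACD
  unfold quadEnergy quadGradSq
  generalize triArea A B C = S at *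
  generalize triArea A C D = T at *
  obtain ⟨L, hL⟩ : ∃ L, L = ‖A - B‖ ^ 2 + ‖B - C‖ ^ 2 + ‖C - D‖ ^ 2 := ⟨_, rfl⟩
  have hL0 : 0 ≤ L := by rw [hL]; positivity
  refine ⟨2 * K / S + 2 * J / T + 2 * L / (S + T), 1 / (2 * (3 * (K * S + J * T))),
    (L + 1) / (S + T), by positivity, by positivity, by positivity, fun a b c d => ?_⟩
  obtain ⟨k1, k2⟩ := HK a b c
  obtain ⟨j1, j2⟩ := HJ a c d
  have g0 := aux_frob_nonneg (gradMat A B C a b c)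
  have f0 := aux_frob_nonneg (gradMat A C D a c d)
  generalize frobSq (gradMat A B C a b c) = g at *
  generalize frobSq (gradMat A C D a c d) = f at *
  have tri : ‖a - c‖ ≤ ‖a - b‖ + ‖b - c‖ := by
    simpa using norm_add_le (a - b) (b - c)
  have hac := norm_nonneg (a - c)
  generalize ‖a - b‖ = x at *
  generalize ‖b - c‖ = y at *
  generalize ‖c - d‖ = z at *
  generalize ‖a - c‖ = t at *
  generalize ‖A - B‖ = l at *
  generalize ‖B - C‖ = m at *
  generalize ‖C - D‖ = n at *
  have ht : t ^ 2 ≤ 2 * (x ^ 2 + y ^ 2) := by nlinarith [sq_nonneg (x - y)]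
  constructor
  · have h1 : (x - l) ^ 2 + (y - m) ^ 2 + (z - n) ^ 2 ≤ 2 * K * g + 2 * J * f + 2 * L := by
      nlinarith [sq_nonneg (x + l), sq_nonneg (y + m), sq_nonneg (z + n), sq_nonneg t]
    have e1 : 2 * K / S * (g * S) = 2 * K * g := by field_simp
    have e2 : 2 * J / T * (f * T) = 2 * J * f := by field_simp
    have e3 : 2 * L / (S + T) * (S + T) = 2 * L := by field_simp
    have r1 : 0 ≤ 2 * K / S * (f * T + (S + T)) := by positivity
    have r2 : 0 ≤ 2 * J / T * (g * S + (S + T)) := by positivity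
    have r3 : 0 ≤ 2 * L / (S + T) * (g * S + f * T) := by positivity
    linarith
  · have h1 : (x - l) ^ 2 + (y - m) ^ 2 + (z - n) ^ 2 ≥ (x ^ 2 + y ^ 2 + z ^ 2) / 2 - L := by
      nlinarith [sq_nonneg (x - 2 * l), sq_nonneg (y - 2 * m), sq_nonneg (z - 2 * n)]
    have e3 : (L + 1) / (S + T) * (S + T) = L + 1 := by field_simp
    have b1 : g * S ≤ K * (x ^ 2 + y ^ 2) * S := mul_le_mul_of_nonneg_right k2 s1.le
    have b2 : f * T ≤ J * (t ^ 2 + z ^ 2) * T := mul_le_mul_of_nonneg_right j2 s2.le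
    have b3 : J * T * (t ^ 2 + z ^ 2) ≤ J * T * (3 * (x ^ 2 + y ^ 2 + z ^ 2)) :=
      mul_le_mul_of_nonneg_left (by nlinarith [sq_nonneg x, sq_nonneg y, sq_nonneg z])
        (by positivity)
    have b4 : K * S * (x ^ 2 + y ^ 2) ≤ K * S * (3 * (x ^ 2 + y ^ 2 + z ^ 2)) :=
      mul_le_mul_of_nonneg_left (by nlinarith [sq_nonneg x, sq_nonneg y, sq_nonneg z])
        (by positivity)
    have b5 : 1 / (2 * (3 * (K * S + J * T))) * (g * S + f * T) ≤
        (x ^ 2 + y ^ 2 + z ^ 2) / 2 := by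
      rw [one_div, inv_mul_le_iff₀ (by positivity)]
      linarith
    linarith
end
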